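/- arXiv:1108.4902 — 3 statements merged into one kernel-verified Lean document; each statement's English description precedes it below -/
import Mathlib

section
/- For any two nonempty finite subsets A, B of Z_2^n of sizes a and b, the cardinality of the Minkowski sum satisfies |A+B| ≥ a ∘ b, where a ∘ b = |IS(a)+IS(b)| is the Hopf–Stiefel function; i.e., initial segments minimize sumset size. -/
open Finset Pointwise

/-- Encoding of the lexicographic order on `(ZMod 2)^n`. -/
def lexNat {n : ℕ} (x : Fin n → ZMod 2) : ℕ := ∑ i, (x i).val * 2 ^ (i : ℕ)

/-- The `k` lexicographically smallest elements of `T`. -/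
def initSeg {n : ℕ} (T : Finset (Fin n → ZMod 2)) (k : ℕ) : Finset (Fin n → ZMod 2) :=
  T.filter fun x => (T.filter fun y => lexNat y < lexNat x).card < k

/-- The Hopf–Stiefel function `a ∘ b = |IS(a) + IS(b)|`, computed in `(ZMod 2)^(a+b)`,
a dimension large enough for the value to be the stable one. -/
def hs (a b : ℕ) : ℕ :=
  (initSeg (Finset.univ : Finset (Fin (a + b) → ZMod 2)) a + initSeg Finset.univ b).card

lemma hsx_xor_le_add (i j : ℕ) : i ^^^ j ≤ i + j := by
  induction i using Nat.strong_induction_on generalizing j with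
  | _ i ih =>
    rcases Nat.eq_zero_or_pos i with h | h
    · subst h; simp
    · have h1 := ih (i / 2) (by omega) (j / 2)
      have h2 : (i ^^^ j) / 2 = i / 2 ^^^ j / 2 := Nat.xor_div_two
      have h3 : (i ^^^ j) % 2 = (i + j) % 2 := Nat.xor_mod_two_eq
      omega

lemma hsx_choose_odd (m i g e : ℕ) (hg : g < 2) (he : e ≤ g) (h : (m.choose i) % 2 = 1) :
    ((2 * m + g).choose (2 * i + e)) % 2 = 1 := by
  haveI : Fact (Nat.Prime 2) := ⟨Nat.prime_two⟩
  have := Choose.choose_modEq_choose_mod_mul_choose_div_nat (n := 2 * m + g) (k := 2 * i + e) (p := 2)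
  unfold Nat.ModEq at this
  rw [this]
  have e1 : (2 * m + g) % 2 = g := by omega
  have e2 : (2 * i + e) % 2 = e := by omega
  have e3 : (2 * m + g) / 2 = m := by omega
  have e4 : (2 * i + e) / 2 = i := by omega
  rw [e1, e2, e3, e4]
  have : g.choose e = 1 := by
    interval_cases g <;> interval_cases e <;> simp
  rw [this, one_mul, h]

lemma hsx_exists (m i j : ℕ) (h : m ≤ i ^^^ j) :
    ∃ i' j', i' ≤ i ∧ j' ≤ j ∧ i' + j' = m ∧ (m.choose i') % 2 = 1 := by
  induction m using Nat.strong_induction_on generalizing i j with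
  | _ m ih =>
    rcases Nat.eq_zero_or_pos m with h0 | h0
    · subst h0; exact ⟨0, 0, by simp⟩
    · have h2 : (i ^^^ j) / 2 = i / 2 ^^^ j / 2 := Nat.xor_div_two
      have h3 : (i ^^^ j) % 2 = (i + j) % 2 := Nat.xor_mod_two_eq
      have h4 := hsx_xor_le_add (i / 2) (j / 2)
      obtain ⟨i', j', hi, hj, hs, hc⟩ := ih (m / 2) (by omega) (i / 2) (j / 2) (by omega)
      have hm : m = 2 * (m / 2) + m % 2 := by omega
      have key : ∀ e ≤ m % 2, 2 * i' + e ≤ i → 2 * j' + (m % 2 - e) ≤ j →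
          ∃ i' j', i' ≤ i ∧ j' ≤ j ∧ i' + j' = m ∧ (m.choose i') % 2 = 1 := by
        intro e he h5 h6
        refine ⟨2 * i' + e, 2 * j' + (m % 2 - e), h5, h6, by omega, ?_⟩
        have := hsx_choose_odd (m / 2) i' (m % 2) e (by omega) he hc
        rwa [← hm] at this
      by_cases h7 : 2 * j' + m % 2 ≤ j
      · exact key 0 (by omega) (by omega) (by omega)
      · exact key (m % 2) le_rfl (by omega) (by omega)

lemma hsx_lexNat_succ {n : ℕ} (x : Fin (n + 1) → ZMod 2) :
    lexNat x = (x 0).val + 2 * lexNat (fun i : Fin n => x i.succ) := by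
  unfold lexNat
  rw [Fin.sum_univ_succ, Finset.mul_sum]
  simp [pow_succ]
  refine Finset.sum_congr rfl fun i _ => by ring

lemma hsx_lexNat_add {n : ℕ} (x y : Fin n → ZMod 2) :
    lexNat (x + y) = lexNat x ^^^ lexNat y := by
  induction n with
  | zero => simp [lexNat]
  | succ n ih =>
    have h := ih (fun i => x i.succ) (fun i => y i.succ)
    have h1 : lexNat (x + y) = (x 0 + y 0).val + 2 *
      lexNat ((fun i : Fin n => x i.succ) + (fun i : Fin n => y i.succ)) := hsx_lexNat_succ _
    rw [h] at h1
    have hx := hsx_lexNat_succ x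
    have hy := hsx_lexNat_succ y
    have h2 : (lexNat x ^^^ lexNat y) / 2 = lexNat x / 2 ^^^ lexNat y / 2 := Nat.xor_div_two
    have h3 : (lexNat x ^^^ lexNat y) % 2 = (lexNat x + lexNat y) % 2 := Nat.xor_mod_two_eq
    have bx := ZMod.val_lt (x 0)
    have hyb := ZMod.val_lt (y 0)
    have h4 := ZMod.val_add (x 0) (y 0)
    have e1 : lexNat x / 2 = lexNat (fun i : Fin n => x i.succ) := by omega
    have e2 : lexNat y / 2 = lexNat (fun i : Fin n => y i.succ) := by omega
    rw [e1, e2] at h2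
    omega

lemma hsx_lexNat_inj {n : ℕ} : Function.Injective (lexNat : (Fin n → ZMod 2) → ℕ) := by
  induction n with
  | zero => intro x y _; exact Subsingleton.elim _ _
  | succ n ih =>
    intro x y h
    rw [hsx_lexNat_succ, hsx_lexNat_succ y] at h
    have bx := ZMod.val_lt (x 0)
    have hyb := ZMod.val_lt (y 0)
    have h1 : (x 0).val = (y 0).val := by omega
    have h2 := ih (show lexNat (fun i : Fin n => x i.succ) = lexNat (fun i : Fin n => y i.succ) by omega)
    funext i
    refine Fin.cases (ZMod.val_injective 2 h1) (fun i => congrFun h2 i) i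

lemma hsx_lexNat_lt {n : ℕ} (x : Fin n → ZMod 2) : lexNat x < 2 ^ n := by
  induction n with
  | zero => simp [lexNat]
  | succ n ih =>
    rw [hsx_lexNat_succ]
    have bx := ZMod.val_lt (x 0)
    have := ih (fun i => x i.succ)
    rw [pow_succ]; omega

lemma hsx_image {n : ℕ} :
    (Finset.univ : Finset (Fin n → ZMod 2)).image lexNat = Finset.range (2 ^ n) := by
  apply Finset.eq_of_subset_of_card_le
  · intro t ht
    obtain ⟨x, _, rfl⟩ := Finset.mem_image.1 ht
    exact Finset.mem_range.2 (hsx_lexNat_lt x)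
  · rw [Finset.card_image_of_injective _ hsx_lexNat_inj]
    simp

lemma hsx_initSeg {n k : ℕ} {x : Fin n → ZMod 2} (hx : x ∈ initSeg Finset.univ k) :
    lexNat x < k := by
  unfold initSeg at hx
  have h := (Finset.mem_filter.1 hx).2
  refine lt_of_le_of_lt ?_ h
  rw [← Finset.card_image_of_injective _ hsx_lexNat_inj]
  conv_lhs => rw [← Finset.card_range (lexNat x)]
  apply Finset.card_le_card
  intro t ht
  have ht' := Finset.mem_range.1 ht
  have : t ∈ (Finset.univ : Finset (Fin n → ZMod 2)).image lexNat := by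
    rw [hsx_image]; exact Finset.mem_range.2 (ht'.trans (hsx_lexNat_lt x))
  obtain ⟨y, _, rfl⟩ := Finset.mem_image.1 this
  exact Finset.mem_image.2 ⟨y, by simpa using ht', rfl⟩

lemma hsx_upper (a b m : ℕ)
    (h : ∀ i j, i < a → j < b → i + j = m → (m.choose i) % 2 ≠ 1) : hs a b ≤ m := by
  unfold hs
  rw [← Finset.card_image_of_injective _ hsx_lexNat_inj]
  conv_rhs => rw [← Finset.card_range m]
  apply Finset.card_le_card
  intro t ht
  obtain ⟨z, hz, rfl⟩ := Finset.mem_image.1 ht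
  obtain ⟨x, hx, y, hy, rfl⟩ := Finset.mem_add.1 hz
  rw [Finset.mem_range, hsx_lexNat_add]
  by_contra! hc
  obtain ⟨i, j, hi, hj, hs, ho⟩ := hsx_exists _ _ _ hc
  exact h i j (hi.trans_lt (hsx_initSeg hx)) (hj.trans_lt (hsx_initSeg hy)) hs ho

/-- The polynomial method over a domain of characteristic two. -/
lemma hsx_poly {R : Type*} [CommRing R] [IsDomain R] [CharP R 2] [DecidableEq R]
    (A B : Finset R) (i j : ℕ)
    (hi : i < A.card) (hj : j < B.card) (hm : i + j = (A + B).card)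
    (hc : ((A + B).card.choose i) % 2 = 1) : False := by
  set m := (A + B).card with hmdef
  let P : Polynomial R := ∏ c ∈ A + B, (Polynomial.X - Polynomial.C c)
  have hPm : P.Monic := Polynomial.monic_prod_of_monic _ _ fun c _ => Polynomial.monic_X_sub_C c
  have hPd : P.natDegree = m := by
    simp only [P]
    rw [Polynomial.natDegree_prod_of_monic _ _ (fun c _ => Polynomial.monic_X_sub_C c)]
    simp [hmdef]
  let L : MvPolynomial (Fin 2) R := MvPolynomial.X 0 + MvPolynomial.X 1
  let f : MvPolynomial (Fin 2) R := Polynomial.aeval L P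
  have hL : L.IsHomogeneous 1 :=
    (MvPolynomial.isHomogeneous_X _ _).add (MvPolynomial.isHomogeneous_X _ _)
  have hLp : ∀ k, (L ^ k).IsHomogeneous k := fun k => by simpa using hL.pow k
  have hf : f = ∑ k ∈ Finset.range (m + 1), MvPolynomial.C (P.coeff k) * L ^ k := by
    simp only [f]
    rw [Polynomial.aeval_eq_sum_range, hPd]
    simp [MvPolynomial.smul_eq_C_mul]
  let t : Fin 2 →₀ ℕ := Finsupp.single 0 i + Finsupp.single 1 j
  have htd : t.degree = m := by simp [t, hm]
  have hft : f.coeff t = (m.choose i : R) := by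
    rw [hf, MvPolynomial.coeff_sum, Finset.sum_eq_single m]
    · have : P.coeff m = 1 := by rw [← hPd]; exact hPm.coeff_natDegree
      rw [this, map_one, one_mul, MvPolynomial.coeff_add_pow]
      simp [t, hm]
    · intro k _ hk
      rw [MvPolynomial.coeff_C_mul, (hLp k).coeff_eq_zero (by rw [htd]; exact hk.symm), mul_zero]
    · simp
  have hne : f.coeff t ≠ 0 := by
    rw [hft, Ne, CharP.cast_eq_zero_iff R 2]
    omega
  have hfd : f.totalDegree = t.degree := by
    apply le_antisymm
    · rw [hf, htd]
      refine MvPolynomial.totalDegree_finsetSum_le fun k hk => ?_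
      refine (MvPolynomial.totalDegree_mul _ _).trans ?_
      have := (hLp k).totalDegree_le
      have := Finset.mem_range.1 hk
      simp only [MvPolynomial.totalDegree_C]
      omega
    · exact MvPolynomial.le_totalDegree (MvPolynomial.mem_support_iff.2 hne)
  obtain ⟨s, hs, hs'⟩ := MvPolynomial.combinatorial_nullstellensatz_exists_eval_nonzero f t hne hfd
    ![A, B] (by intro k; fin_cases k <;> simp [t, hi, hj])
  apply hs'
  have h0 : s 0 ∈ A := hs 0
  have h1 : s 1 ∈ B := hs 1
  have : MvPolynomial.eval s f = P.eval (s 0 + s 1) := by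
    rw [hf, Polynomial.eval_eq_sum_range, hPd]
    simp [L]
  rw [this]
  simp only [P, Polynomial.eval_prod]
  exact Finset.prod_eq_zero (Finset.add_mem_add h0 h1) (by simp)

/-- An additive embedding of `(ZMod 2)^n` into the polynomial ring over `ZMod 2`. -/
noncomputable def hsxEmb (n : ℕ) : (Fin n → ZMod 2) →+ Polynomial (ZMod 2) where
  toFun x := ∑ i : Fin n, Polynomial.monomial (i : ℕ) (x i)
  map_zero' := by simp
  map_add' x y := by simp [Finset.sum_add_distrib]

lemma hsxEmb_inj (n : ℕ) : Function.Injective (hsxEmb n) := by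
  intro x y h
  funext i
  have := congrArg (fun p => Polynomial.coeff p (i : ℕ)) h
  simpa [hsxEmb, Polynomial.finsetSum_coeff, Polynomial.coeff_monomial, Fin.val_inj] using this

theorem stmt3 {n : ℕ} (A B : Finset (Fin n → ZMod 2)) (hA : A.Nonempty) (hB : B.Nonempty) :
    hs A.card B.card ≤ (A + B).card := by
  classical
  apply hsx_upper
  intro i j hi hj hm hc
  have h1 : (A.image (hsxEmb n) + B.image (hsxEmb n)).card = (A + B).card := by
    rw [← Finset.image_add, Finset.card_image_of_injective _ (hsxEmb_inj n)]
  apply hsx_poly (A.image (hsxEmb n)) (B.image (hsxEmb n)) i j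
  · rwa [Finset.card_image_of_injective _ (hsxEmb_inj n)]
  · rwa [Finset.card_image_of_injective _ (hsxEmb_inj n)]
  · rw [h1, hm]
  · rw [h1, hc]
end

section
/- Asymptotic upper bound for the Freiman–Ruzsa constant in Z_2^n: for every real t ≥ 2, if A ⊆ Z_2^n affinely generates Z_2^n and |A+A|/|A| ≤ (C(t,2)+t+1)/(t+1), then 2^n/|A| ≤ 2^t/(t+1). Equivalently, F((C(t,2)+t+1)/(t+1)) ≤ 2^t/(t+1), where F(K) is the supremum of |⟨A⟩|/|A| over affinely generating A with doubling constant at most K. -/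
open Finset Pointwise

lemma pow_bound (u : ℝ) (hu : 1 ≤ u) : u ^ 2 + 2 * u + 3 ≤ 3 * (2 : ℝ) ^ u := by
  have h2 : (2 : ℝ) ^ u = 2 * Real.exp (Real.log 2 * (u - 1)) := by
    have : (2 : ℝ) ^ u = 2 ^ (1 : ℝ) * 2 ^ (u - 1) := by
      rw [← Real.rpow_add (by norm_num)]; congr 1; ring
    rw [this, Real.rpow_one, Real.rpow_def_of_pos (by norm_num)]
  have hl := Real.log_two_gt_d9
  have hv : 0 ≤ u - 1 := by linarith
  have hq := Real.quadratic_le_exp_of_nonneg (x := Real.log 2 * (u - 1)) (by positivity)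
  rw [h2]
  have hl' : (0.69 : ℝ) ≤ Real.log 2 := by linarith
  have h3 : 0.69 * (u - 1) ≤ Real.log 2 * (u - 1) := by gcongr
  have h4 : (0.69 * (u - 1)) ^ 2 ≤ (Real.log 2 * (u - 1)) ^ 2 := by gcongr
  nlinarith [mul_le_mul_of_nonneg_right (show (0.693 : ℝ) ≤ Real.log 2 by linarith) hv]

lemma pow_bound' (u : ℝ) (hu : 1 ≤ u) : u + 1 ≤ (2 : ℝ) ^ u := by
  have := pow_bound u hu
  nlinarith [sq_nonneg (u - 1)]

lemma pow_bound2 (t : ℝ) (ht : 2 ≤ t) : 4 * (t + 1) ≤ 3 * (2 : ℝ) ^ t := by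
  have h := pow_bound (t - 1) (by linarith)
  have : (2 : ℝ) ^ t = 2 * 2 ^ (t - 1) := by
    have : (2 : ℝ) ^ t = 2 ^ (1 : ℝ) * 2 ^ (t - 1) := by
      rw [← Real.rpow_add (by norm_num)]; congr 1; ring
    rw [this, Real.rpow_one]
  rw [this]
  nlinarith

lemma numeric (t : ℝ) (ht : 2 ≤ t) (m : ℕ) (B : ℝ) (hB : 0 ≤ B)
    (hm2 : 2 ≤ m → 2 * B ≤ m)
    (hR : 1 ≤ m → 2 * (1 + m) + (m - 1) * B ≤
      2 * ((t * (t - 1) / 2 + t + 1) / (t + 1)) * (1 + B)) :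
    (2 : ℝ) ^ m * (t + 1) ≤ (2 : ℝ) ^ t * (1 + B) := by
  have h4 := pow_bound2 t ht
  have ht1 : 0 < t + 1 := by linarith
  have hpos : (0 : ℝ) < 2 ^ t := by positivity
  rcases Nat.eq_zero_or_pos m with rfl | hm
  · simp only [pow_zero, one_mul]
    nlinarith
  by_cases hBm : 2 * B ≤ m
  swap
  · have : m = 1 := by
      by_contra hne
      exact hBm (hm2 (by omega))
    subst this
    push_cast at hBm
    simp only [pow_one]
    nlinarith
  have hR := hR hm
  have hm' : (1 : ℝ) ≤ m := by exact_mod_cast hm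
  have hR' : (t + 1) * (2 * (1 + m) + (m - 1) * B) ≤ (t ^ 2 + t + 2) * (1 + B) := by
    have := mul_le_mul_of_nonneg_left hR ht1.le
    refine this.trans (le_of_eq ?_)
    field_simp
    ring
  have htm : (m : ℝ) + 1 ≤ t := by
    by_contra hlt
    push Not at hlt
    -- (t^2+t+2)(m+2) < (m^2+3m+4)(t+1)
    have h1 : (t ^ 2 + t + 2) * (m + 2) < ((m : ℝ) ^ 2 + 3 * m + 4) * (t + 1) := by
      have : ((m : ℝ) ^ 2 + 3 * m + 4) * (t + 1) - (t ^ 2 + t + 2) * (m + 2)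
        = (m + 1 - t) * ((m + 2) * (t + 1) - 2) := by ring
      have h2 : 0 < (m + 1 - t) * ((m + 2) * (t + 1) - 2) := by
        apply mul_pos
        · linarith
        · nlinarith
      linarith
    have h3 : (t + 1) * ((2 * (1 + m) + (m - 1) * B) * (m + 2)) <
        (t + 1) * (((m : ℝ) ^ 2 + 3 * m + 4) * (1 + B)) := by
      have := mul_le_mul_of_nonneg_right hR' (show (0 : ℝ) ≤ m + 2 by linarith)
      have := mul_lt_mul_of_pos_right h1 (show (0 : ℝ) < 1 + B by linarith)
      nlinarith
    have h5 := lt_of_mul_lt_mul_left h3 ht1.le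
    nlinarith
  have hu := pow_bound (t - m) (by linarith)
  have hu' := pow_bound' (t - m) (by linarith)
  set p : ℝ := (2 : ℝ) ^ (t - m) with hp
  have hpt : (2 : ℝ) ^ t = 2 ^ m * p := by
    rw [hp, ← Real.rpow_natCast, ← Real.rpow_add (by norm_num)]; congr 1; ring
  have h6 : t ^ 2 + t + 2 - (m - 1) * (t + 1) ≤ (m + 3) * p := by
    have := mul_le_mul_of_nonneg_left hu' (show (0 : ℝ) ≤ m by linarith)
    nlinarith
  have h7 : (m + 3) * (t + 1) ≤ (m + 3) * (p * (1 + B)) := by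
    have := mul_le_mul_of_nonneg_right h6 (show (0 : ℝ) ≤ 1 + B by linarith)
    nlinarith
  have h8 := le_of_mul_le_mul_left h7 (by linarith)
  rw [hpt, mul_assoc]
  gcongr

lemma z2_cases (a : ZMod 2) : a = 0 ∨ a = 1 := by revert a; decide

lemma z2_add_self {n : ℕ} (x : Fin n → ZMod 2) : x + x = 0 := by
  funext i; exact CharTwo.add_self_eq_zero (x i)

lemma z2_add_add {n : ℕ} (x y : Fin n → ZMod 2) : x + y + y = x := by
  rw [add_assoc, z2_add_self, add_zero]

lemma z2_add_add_left {n : ℕ} (x y : Fin n → ZMod 2) : x + (x + y) = y := by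
  rw [← add_assoc, z2_add_self, zero_add]

/-- the map pushing points of `A` in direction `v`, from `y j = 1` to `y j = 0`. -/
def pushMap {n : ℕ} (j : Fin n) (v : Fin n → ZMod 2) (A : Finset (Fin n → ZMod 2))
    (y : Fin n → ZMod 2) : Fin n → ZMod 2 :=
  if y j = 1 ∧ y + v ∉ A then y + v else y

/-- one-dimensional compression -/
def comp {n : ℕ} (j : Fin n) (v : Fin n → ZMod 2) (A : Finset (Fin n → ZMod 2)) :
    Finset (Fin n → ZMod 2) := A.image (pushMap j v A)

lemma pushMap_injOn {n : ℕ} (j : Fin n) (v : Fin n → ZMod 2) (A : Finset (Fin n → ZMod 2)) :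
    Set.InjOn (pushMap j v A) (A : Set (Fin n → ZMod 2)) := by
  intro x hx y hy h
  simp only [pushMap] at h
  simp only [mem_coe] at hx hy
  split_ifs at h with h1 h2 h2
  · exact add_right_cancel h
  · exact absurd (h ▸ hy) h1.2
  · exact absurd (h ▸ hx) h2.2
  · exact h

lemma card_comp {n : ℕ} (j : Fin n) (v : Fin n → ZMod 2) (A : Finset (Fin n → ZMod 2)) :
    (comp j v A).card = A.card := card_image_of_injOn (pushMap_injOn j v A)

lemma mem_comp {n : ℕ} {j : Fin n} {v : Fin n → ZMod 2} (hv : v j = 1)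
    {A : Finset (Fin n → ZMod 2)} {y : Fin n → ZMod 2} :
    y ∈ comp j v A ↔ (y j = 0 ∧ (y ∈ A ∨ y + v ∈ A)) ∨ (y j = 1 ∧ y ∈ A ∧ y + v ∈ A) := by
  have h11 : (1 : ZMod 2) + 1 = 0 := by decide
  simp only [comp, mem_image, pushMap]
  constructor
  · rintro ⟨x, hx, rfl⟩
    split_ifs with h
    · left
      simp [h.1, hv, h11, z2_add_add, hx]
    · rcases z2_cases (x j) with h0 | h1
      · exact Or.inl ⟨h0, Or.inl hx⟩
      · right
        refine ⟨h1, hx, ?_⟩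
        by_contra h2
        exact h ⟨h1, h2⟩
  · rintro (⟨h0, h1⟩ | ⟨h1, h2, h3⟩)
    · by_cases hy : y ∈ A
      · exact ⟨y, hy, by simp [h0]⟩
      · refine ⟨y + v, h1.resolve_left hy, ?_⟩
        rw [if_pos, z2_add_add]
        rw [z2_add_add]
        exact ⟨by simp [h0, hv], hy⟩
    · exact ⟨y, h2, by simp [h3]⟩

lemma comp_add_subset {n : ℕ} {j : Fin n} {v : Fin n → ZMod 2} (hv : v j = 1)
    (A : Finset (Fin n → ZMod 2)) : comp j v A + comp j v A ⊆ comp j v (A + A) := by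
  have h11 : (1 : ZMod 2) + 1 = 0 := by decide
  intro z hz
  obtain ⟨x, hx, y, hy, rfl⟩ := mem_add.1 hz
  rw [mem_comp hv] at hx hy ⊢
  have e1 : ∀ x y : Fin n → ZMod 2, x + v + y = x + y + v := fun x y => by abel
  have e2 : ∀ x y : Fin n → ZMod 2, x + (y + v) = x + y + v := fun x y => by abel
  have e3 : ∀ x y : Fin n → ZMod 2, x + v + (y + v) = x + y := fun x y => by
    rw [e1, ← add_assoc, z2_add_add]
  rcases hx with ⟨x0, hx⟩ | ⟨x1, hx, hx'⟩ <;> rcases hy with ⟨y0, hy⟩ | ⟨y1, hy, hy'⟩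
  · left
    refine ⟨by simp [x0, y0], ?_⟩
    rcases hx with hx | hx <;> rcases hy with hy | hy
    · exact Or.inl (add_mem_add hx hy)
    · right; rw [← e2]; exact add_mem_add hx hy
    · right; rw [← e1]; exact add_mem_add hx hy
    · left; rw [← e3]; exact add_mem_add hx hy
  · right
    refine ⟨by simp [x0, y1], ?_⟩
    rcases hx with hx | hx
    · exact ⟨add_mem_add hx hy, by rw [← e2]; exact add_mem_add hx hy'⟩
    · exact ⟨by rw [← e3]; exact add_mem_add hx hy', by rw [← e1]; exact add_mem_add hx hy⟩
  · right
    refine ⟨by simp [x1, y0], ?_⟩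
    rcases hy with hy | hy
    · exact ⟨add_mem_add hx hy, by rw [← e1]; exact add_mem_add hx' hy⟩
    · exact ⟨by rw [← e3]; exact add_mem_add hx' hy, by rw [← e2]; exact add_mem_add hx hy⟩
  · left
    exact ⟨by simp [x1, y1, h11], Or.inl (add_mem_add hx hy)⟩

lemma card_comp_add_le {n : ℕ} {j : Fin n} {v : Fin n → ZMod 2} (hv : v j = 1)
    (A : Finset (Fin n → ZMod 2)) : (comp j v A + comp j v A).card ≤ (A + A).card :=
  (card_le_card (comp_add_subset hv A)).trans (card_comp j v _).le

/-- weight -/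
def wt {n : ℕ} (S : Finset (Fin n)) (y : Fin n → ZMod 2) : ℕ :=
  ∑ i ∈ Sᶜ, (i.val + 1) * (y i).val

lemma comp_wt_lt {n : ℕ} {S : Finset (Fin n)} {j : Fin n} {v : Fin n → ZMod 2}
    (A : Finset (Fin n → ZMod 2)) (hw : ∀ y, y j = 1 → wt S (y + v) < wt S y)
    {y : Fin n → ZMod 2} (hy : y ∈ A) (hyj : y j = 1) (hyv : y + v ∉ A) :
    ∑ z ∈ comp j v A, wt S z < ∑ z ∈ A, wt S z := by
  rw [comp, sum_image (pushMap_injOn j v A)]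
  apply sum_lt_sum
  · intro z _
    simp only [pushMap]
    split_ifs with h
    · exact (hw z h.1).le
    · exact le_rfl
  · refine ⟨y, hy, ?_⟩
    simp only [pushMap]
    rw [if_pos ⟨hyj, hyv⟩]
    exact hw y hyj

/-- `y` lies in the coset `e_j + V_S`. -/
def InC {n : ℕ} (S : Finset (Fin n)) (j : Fin n) (y : Fin n → ZMod 2) : Prop :=
  y j = 1 ∧ ∀ i, i ∉ S → i ≠ j → y i = 0

/-- `y` lies in the subspace `V_S`. -/
def InV {n : ℕ} (S : Finset (Fin n)) (y : Fin n → ZMod 2) : Prop := ∀ i, i ∉ S → y i = 0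

/-- `A` contains `V_S` and meets every coset `e_j + V_S`. -/
def Good {n : ℕ} (S : Finset (Fin n)) (A : Finset (Fin n → ZMod 2)) : Prop :=
  (∀ y, InV S y → y ∈ A) ∧ ∀ j, j ∉ S → ∃ y ∈ A, InC S j y

lemma wt_lt_one {n : ℕ} {S : Finset (Fin n)} {j : Fin n} (hj : j ∉ S) {v : Fin n → ZMod 2}
    (hv : InC S j v) (y : Fin n → ZMod 2) (hy : y j = 1) : wt S (y + v) < wt S y := by
  have h11 : (1 : ZMod 2) + 1 = 0 := by decide
  have hv11 : (1 : ZMod 2).val = 1 := by decide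
  apply sum_lt_sum
  · intro i hi
    by_cases hij : i = j
    · subst hij; simp [hy, hv.1, h11]
    · simp [hv.2 i (by simpa using hi) hij]
  · refine ⟨j, by simpa using hj, ?_⟩
    simp [hy, hv.1, h11, hv11]

lemma wt_lt_two {n : ℕ} {S : Finset (Fin n)} {i j : Fin n} (hi : i ∉ S) (hj : j ∉ S) (hij : i < j)
    {v : Fin n → ZMod 2} (hvi : v i = 1) (hvj : v j = 1)
    (hv : ∀ l, l ∉ S → l ≠ i → l ≠ j → v l = 0) (y : Fin n → ZMod 2) (hy : y j = 1) :
    wt S (y + v) < wt S y := by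
  have h11 : (1 : ZMod 2) + 1 = 0 := by decide
  have hv11 : (1 : ZMod 2).val = 1 := by decide
  have hjS : j ∈ Sᶜ := by simpa using hj
  have hiS : i ∈ Sᶜ.erase j := by simp [hi, hij.ne]
  unfold wt
  rw [← add_sum_erase _ _ hjS, ← add_sum_erase _ _ hiS, ← add_sum_erase (Sᶜ) (fun i => (i.val + 1) * (y i).val) hjS, ← add_sum_erase (Sᶜ.erase j) _ hiS]
  have : ∑ l ∈ (Sᶜ.erase j).erase i, (l.val + 1) * ((y + v) l).val =
      ∑ l ∈ (Sᶜ.erase j).erase i, (l.val + 1) * (y l).val := by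
    apply sum_congr rfl
    intro l hl
    simp only [mem_erase, mem_compl] at hl
    simp [hv l hl.2.2 hl.1 hl.2.1]
  rw [this]
  have hij' : i.val < j.val := hij
  rcases z2_cases (y i) with h | h <;> simp [hy, hvi, hvj, h, h11, hv11] <;> omega

open Classical in
lemma card_InV {n : ℕ} (S : Finset (Fin n)) :
    (univ.filter (InV S)).card = 2 ^ S.card := by
  have : univ.filter (InV S) =
      Fintype.piFinset (fun i => if i ∈ S then (univ : Finset (ZMod 2)) else {0}) := by
    ext y
    simp only [mem_filter, mem_univ, true_and, InV, Fintype.mem_piFinset]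
    refine forall_congr' fun i => ?_
    by_cases h : i ∈ S <;> simp [h]
  rw [this, Fintype.card_piFinset]
  have : ∀ i : Fin n, (if i ∈ S then (univ : Finset (ZMod 2)) else {0}).card =
      if i ∈ S then 2 else 1 := by
    intro i
    split_ifs <;> simp [ZMod.card]
  simp only [this]
  rw [prod_ite]
  simp

lemma InC_single {n : ℕ} (S : Finset (Fin n)) (j : Fin n) : InC S j (Pi.single j 1) := by
  refine ⟨by simp, fun i _ h => ?_⟩
  simp [h]

lemma InC_add_InC {n : ℕ} {S : Finset (Fin n)} {j : Fin n} {x y : Fin n → ZMod 2}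
    (hx : InC S j x) (hy : InC S j y) : InV S (x + y) := by
  have h11 : (1 : ZMod 2) + 1 = 0 := by decide
  intro i hi
  by_cases hij : i = j
  · subst hij; simp [hx.1, hy.1, h11]
  · simp [hx.2 i hi hij, hy.2 i hi hij]

lemma InC_add_InV {n : ℕ} {S : Finset (Fin n)} {j : Fin n} (hj : j ∉ S) {x y : Fin n → ZMod 2}
    (hx : InC S j x) (hy : InV S y) : InC S j (x + y) := by
  refine ⟨by simp [hx.1, hy j hj], fun i hi hij => by simp [hx.2 i hi hij, hy i hi]⟩

open Classical in
lemma card_InC {n : ℕ} (S : Finset (Fin n)) (j : Fin n) (hj : j ∉ S) :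
    (univ.filter (InC S j)).card = 2 ^ S.card := by
  rw [← card_InV S]
  symm
  refine card_bij (fun y _ => Pi.single j 1 + y) ?_ ?_ ?_
  · intro y hy
    simp only [mem_filter, mem_univ, true_and] at hy ⊢
    exact InC_add_InV hj (InC_single S j) hy
  · intro x _ y _ h
    exact add_left_cancel h
  · intro y hy
    simp only [mem_filter, mem_univ, true_and] at hy
    refine ⟨Pi.single j 1 + y, ?_, z2_add_add_left _ _⟩
    simp only [mem_filter, mem_univ, true_and]
    exact InC_add_InC (InC_single S j) hy

open Classical in
/-- the structure of an extremal compressed set -/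
lemma exists_structure {n : ℕ} (A₀ : Finset (Fin n → ZMod 2)) (h₀ : Good ∅ A₀) :
    ∃ (S : Finset (Fin n)) (A : Finset (Fin n → ZMod 2)), Good S A ∧ A.card = A₀.card ∧
      (A + A).card ≤ (A₀ + A₀).card ∧
      (∀ y ∈ A, ∀ i, i ∉ S → ∀ j, j ∉ S → i ≠ j → y i = 1 → y j = 1 → False) ∧
      (∀ i, i ∉ S → ∀ j, j ∉ S → i < j →
        (A.filter (InC S i)).card + (A.filter (InC S j)).card ≤ 2 ^ S.card) := by
  set P : Finset (Fin n) → Finset (Fin n → ZMod 2) → Prop := fun S A =>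
    Good S A ∧ A.card = A₀.card ∧ (A + A).card ≤ (A₀ + A₀).card with hP
  obtain ⟨⟨S, A'⟩, hSA', hmax⟩ := exists_max_image
    (univ.filter fun p : Finset (Fin n) × Finset (Fin n → ZMod 2) => P p.1 p.2)
    (fun p => p.1.card) ⟨(∅, A₀), by simp [hP, h₀]⟩
  simp only [mem_filter, mem_univ, true_and, Prod.forall] at hSA' hmax
  obtain ⟨A, hA, hmin⟩ := exists_min_image
    (univ.filter fun A : Finset (Fin n → ZMod 2) => P S A)
    (fun A => ∑ z ∈ A, wt S z) ⟨A', by simpa using hSA'⟩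
  simp only [mem_filter, mem_univ, true_and] at hA hmin
  obtain ⟨hgood, hcard, hsum⟩ := hA
  -- stability
  have stab : ∀ (j : Fin n) (v : Fin n → ZMod 2), v j = 1 →
      (∀ y, y j = 1 → wt S (y + v) < wt S y) → Good S (comp j v A) →
      ∀ y ∈ A, y j = 1 → y + v ∈ A := by
    intro j v hv hw hg y hy hyj
    by_contra hyv
    have h1 := comp_wt_lt A hw hy hyj hyv
    have h2 := hmin (comp j v A)
      ⟨hg, (card_comp j v A).trans hcard, (card_comp_add_le hv A).trans hsum⟩
    omega
  have claim1 : ∀ j, j ∉ S → ∀ v, InC S j v → ∀ y ∈ A, y j = 1 → y + v ∈ A := by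
    intro j hj v hv
    refine stab j v hv.1 (wt_lt_one hj hv) ⟨?_, ?_⟩
    · intro y hy
      rw [mem_comp hv.1]
      exact Or.inl ⟨hy j hj, Or.inl (hgood.1 y hy)⟩
    · intro i hi
      obtain ⟨y, hyA, hy⟩ := hgood.2 i hi
      refine ⟨y, ?_, hy⟩
      rw [mem_comp hv.1]
      by_cases hij : i = j
      · subst hij
        exact Or.inr ⟨hy.1, hyA, hgood.1 _ (InC_add_InC hy hv)⟩
      · exact Or.inl ⟨hy.2 j hj (Ne.symm hij), Or.inl hyA⟩
  have claim2 : ∀ i, i ∉ S → ¬ ∀ y, InC S i y → y ∈ A := by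
    intro i hi hall
    have hg : Good (insert i S) A := by
      refine ⟨fun y hy => ?_, fun j hj => ?_⟩
      · rcases z2_cases (y i) with h | h
        · refine hgood.1 y fun l hl => ?_
          by_cases hli : l = i
          · rw [hli, h]
          · exact hy l (by simp [hl, hli])
        · exact hall y ⟨h, fun l hl hli => hy l (by simp [hl, hli])⟩
      · simp only [mem_insert, not_or] at hj
        obtain ⟨y, hyA, hy⟩ := hgood.2 j hj.2
        exact ⟨y, hyA, hy.1, fun l hl hlj => hy.2 l (fun h => hl (mem_insert_of_mem h)) hlj⟩
    have := hmax (insert i S) A ⟨hg, hcard, hsum⟩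
    rw [card_insert_of_notMem hi] at this
    omega
  refine ⟨S, A, hgood, hcard, hsum, ?_, ?_⟩
  · intro y₀ hy₀ i hi j hj hij hy₀i hy₀j
    obtain ⟨y, hy, hymin⟩ := exists_min_image (A.filter fun y => y i = 1 ∧ y j = 1) (wt S)
      ⟨y₀, by simp [hy₀, hy₀i, hy₀j]⟩
    simp only [mem_filter] at hy hymin
    obtain ⟨hyA, hyi, hyj⟩ := hy
    have hsupp : ∀ l, l ∉ S → l ≠ i → l ≠ j → y l = 0 := by
      intro l hl hli hlj
      rcases z2_cases (y l) with h | h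
      · exact h
      exfalso
      have hm := claim1 l hl _ (InC_single S l) y hyA h
      have hlt := wt_lt_one hl (InC_single S l) y h
      have := hymin (y + Pi.single l 1) ⟨hm, by simp [hyi, Ne.symm hli], by simp [hyj, Ne.symm hlj]⟩
      omega
    refine claim2 i hi fun z hz => ?_
    have hv : InC S j (y + z) := by
      refine ⟨by simp [hyj, hz.2 j hj (Ne.symm hij)], fun l hl hlj => ?_⟩
      by_cases hli : l = i
      · subst hli
        have h11 : (1 : ZMod 2) + 1 = 0 := by decide
        simp [hyi, hz.1, h11]
      · simp [hsupp l hl hli hlj, hz.2 l hl hli]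
    have := claim1 j hj _ hv y hyA hyj
    rwa [z2_add_add_left] at this
  · intro i hi j hj hij
    by_contra hlt
    push Not at hlt
    have key : ∀ v : Fin n → ZMod 2, v i = 1 → v j = 1 →
        (∀ l, l ∉ S → l ≠ i → l ≠ j → v l = 0) → ∀ y ∈ A, y j = 1 → y + v ∈ A := by
      intro v hvi hvj hv
      have h11 : (1 : ZMod 2) + 1 = 0 := by decide
      refine stab j v hvj (wt_lt_two hi hj hij hvi hvj hv) ⟨?_, ?_⟩
      · intro y hy
        rw [mem_comp hvj]
        exact Or.inl ⟨hy j hj, Or.inl (hgood.1 y hy)⟩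
      · intro l hl
        by_cases hlj : l = j
        · subst hlj
          have hsub1 : A.filter (InC S i) ⊆ univ.filter (InC S i) :=
            filter_subset_filter _ (subset_univ _)
          have hsub2 : (A.filter (InC S l)).image (fun y => y + v) ⊆ univ.filter (InC S i) := by
            intro z hz
            simp only [mem_image, mem_filter] at hz
            obtain ⟨y, ⟨_, hy⟩, rfl⟩ := hz
            simp only [mem_filter, mem_univ, true_and]
            refine ⟨by simp [hy.2 i hi hij.ne, hvi], fun k hk hki => ?_⟩
            by_cases hkl : k = l
            · subst hkl; simp [hy.1, hvj, h11]
            · simp [hy.2 k hk hkl, hv k hk hki hkl]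
          have hc2 : ((A.filter (InC S l)).image (fun y => y + v)).card =
              (A.filter (InC S l)).card :=
            card_image_of_injective _ (add_left_injective v)
          obtain ⟨z, hz⟩ := inter_nonempty_of_card_lt_card_add_card hsub1 hsub2
            (by rw [card_InC S i hi, hc2]; exact hlt)
          simp only [mem_inter, mem_image, mem_filter] at hz
          obtain ⟨⟨hzA, _⟩, y, ⟨hyA, hy⟩, rfl⟩ := hz
          refine ⟨y, ?_, hy⟩
          rw [mem_comp hvj]
          exact Or.inr ⟨hy.1, hyA, hzA⟩
        · obtain ⟨y, hyA, hy⟩ := hgood.2 l hl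
          refine ⟨y, ?_, hy⟩
          rw [mem_comp hvj]
          exact Or.inl ⟨hy.2 j hj (Ne.symm hlj), Or.inl hyA⟩
    refine claim2 i hi fun z hz => ?_
    obtain ⟨y, hyA, hy⟩ := hgood.2 j hj
    have := key (y + z) (by simp [hz.1, hy.2 i hi hij.ne]) (by simp [hy.1, hz.2 j hj hij.ne'])
      (fun l hl hli hlj => by simp [hy.2 l hl hlj, hz.2 l hl hli]) y hyA hy.1
    rwa [z2_add_add_left] at this

open Classical in
lemma counting {n : ℕ} (S : Finset (Fin n)) (A : Finset (Fin n → ZMod 2)) (hg : Good S A)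
    (h3 : ∀ y ∈ A, ∀ i, i ∉ S → ∀ j, j ∉ S → i ≠ j → y i = 1 → y j = 1 → False)
    (a : ℕ) (ha : a = ∑ j ∈ Sᶜ, (A.filter (InC S j)).card) :
    A.card = 2 ^ S.card + a ∧
    2 * (2 ^ S.card * (1 + Sᶜ.card)) + (Sᶜ.card - 1) * a ≤ 2 * (A + A).card := by
  have hdisj : ∀ i, i ∉ S → ∀ j, j ∉ S → i ≠ j → ∀ y, InC S i y → InC S j y → False := by
    intro i hi j hj hij y h h'
    have := h'.2 i hi hij
    rw [h.1] at this
    exact one_ne_zero this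
  have hdisjV : ∀ i, i ∉ S → ∀ y, InC S i y → InV S y → False := by
    intro i hi y h h'
    have := h' i hi
    rw [h.1] at this
    exact one_ne_zero this
  have h0 : (0 : Fin n → ZMod 2) ∈ A := hg.1 0 (fun _ _ => rfl)
  constructor
  · have hA : A = univ.filter (InV S) ∪ (Sᶜ).biUnion fun j => A.filter (InC S j) := by
      ext y
      simp only [mem_union, mem_filter, mem_univ, true_and, mem_biUnion, mem_compl]
      constructor
      · intro hy
        by_cases hV : InV S y
        · exact Or.inl hV
        right
        unfold InV at hV
        push Not at hV
        obtain ⟨j, hj, hyj⟩ := hV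
        have hyj := (z2_cases (y j)).resolve_left hyj
        refine ⟨j, hj, hy, hyj, fun i hi hij => ?_⟩
        rcases z2_cases (y i) with h | h
        · exact h
        · exact (h3 y hy i hi j hj hij h hyj).elim
      · rintro (h | ⟨j, _, h, _⟩)
        · exact hg.1 y h
        · exact h
    have hd : Disjoint (univ.filter (InV S)) ((Sᶜ).biUnion fun j => A.filter (InC S j)) := by
      rw [disjoint_left]
      intro y hy hy'
      simp only [mem_filter, mem_univ, true_and, mem_biUnion, mem_compl] at hy hy'
      obtain ⟨j, hj, _, h⟩ := hy'
      exact hdisjV j hj y h hy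
    conv_lhs => rw [hA]
    rw [card_union_of_disjoint hd, card_InV, card_biUnion, ha]
    intro i hi j hj hij
    rw [Function.onFun, disjoint_left]
    intro y hy hy'
    simp only [mem_filter, mem_compl] at hy hy' hi hj
    exact hdisj i (by simpa using hi) j (by simpa using hj) hij y hy.2 hy'.2
  · -- the part of weight two
    set D := (A + A).filter fun y => (Sᶜ.filter fun i => y i = 1).card = 2 with hD
    have hU : univ.filter (InV S) ∪ ((Sᶜ).biUnion fun j => univ.filter (InC S j)) ∪ D ⊆ A + A := by
      intro y hy
      simp only [mem_union, mem_filter, mem_univ, true_and, mem_biUnion, mem_compl, hD] at hy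
      rcases hy with (h | ⟨j, hj, h⟩) | h
      · simpa using add_mem_add (hg.1 y h) h0
      · obtain ⟨x, hxA, hx⟩ := hg.2 j hj
        have := add_mem_add hxA (hg.1 _ (InC_add_InC hx h))
        rwa [z2_add_add_left] at this
      · exact h.1
    have hd1 : Disjoint (univ.filter (InV S)) ((Sᶜ).biUnion fun j => univ.filter (InC S j)) := by
      rw [disjoint_left]
      intro y hy hy'
      simp only [mem_filter, mem_univ, true_and, mem_biUnion, mem_compl] at hy hy'
      obtain ⟨j, hj, h⟩ := hy'
      exact hdisjV j hj y h hy
    have hd2 : Disjoint (univ.filter (InV S) ∪ ((Sᶜ).biUnion fun j => univ.filter (InC S j))) D := by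
      rw [disjoint_left]
      intro y hy hy'
      simp only [mem_filter, mem_univ, true_and, mem_biUnion, mem_compl, hD, mem_union] at hy hy'
      obtain ⟨i, j, hij, hs⟩ := card_eq_two.1 hy'.2
      have hi : i ∈ Sᶜ.filter fun i => y i = 1 := by simp [hs]
      have hj : j ∈ Sᶜ.filter fun i => y i = 1 := by simp [hs]
      simp only [mem_filter, mem_compl] at hi hj
      rcases hy with h | ⟨l, hl, h⟩
      · have := h i hi.1
        rw [hi.2] at this
        exact one_ne_zero this
      · by_cases hil : i = l
        · have := h.2 j hj.1 (fun h => hij (hil.trans h.symm))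
          rw [hj.2] at this
          exact one_ne_zero this
        · have := h.2 i hi.1 hil
          rw [hi.2] at this
          exact one_ne_zero this
    have hc := card_le_card hU
    rw [card_union_of_disjoint hd2, card_union_of_disjoint hd1, card_InV, card_biUnion] at hc
    swap
    · intro i hi j hj hij
      rw [Function.onFun, disjoint_left]
      intro y hy hy'
      simp only [mem_filter, mem_univ, true_and] at hy hy'
      exact hdisj i (by simpa using hi) j (by simpa using hj) hij y hy hy'
    rw [sum_congr rfl (fun j hj => card_InC S j (by simpa using hj)), sum_const, smul_eq_mul] at hc
    -- double counting
    have hdc : ∑ i ∈ Sᶜ, (D.filter fun y => y i = 1).card = 2 * D.card := by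
      have := sum_card_bipartiteAbove_eq_sum_card_bipartiteBelow (s := Sᶜ) (t := D)
        (fun (i : Fin n) (y : Fin n → ZMod 2) => y i = 1)
      simp only [bipartiteAbove, bipartiteBelow] at this
      rw [this, sum_congr rfl (fun y hy => (mem_filter.1 hy).2), sum_const, smul_eq_mul, mul_comm]
    choose! r hrA hr using hg.2
    have hlow : ∀ i ∈ Sᶜ, (Sᶜ.card - 1) * (A.filter (InC S i)).card ≤
        (D.filter fun y => y i = 1).card := by
      intro i hi
      have hiS : i ∉ S := by simpa using hi
      have hsub : (Sᶜ.erase i).biUnion (fun j => (A.filter (InC S i)).image fun y => y + r j) ⊆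
          D.filter fun y => y i = 1 := by
        intro z hz
        simp only [mem_biUnion, mem_erase, mem_compl, mem_image, mem_filter] at hz
        obtain ⟨j, ⟨hji, hj⟩, y, ⟨hyA, hy⟩, rfl⟩ := hz
        have hrj := hr j hj
        simp only [hD, mem_filter]
        refine ⟨⟨add_mem_add hyA (hrA j hj), ?_⟩, by simp [hy.1, hrj.2 i hiS hji.symm]⟩
        rw [card_eq_two]
        refine ⟨i, j, hji.symm, ?_⟩
        ext l
        simp only [mem_filter, mem_compl, mem_insert, mem_singleton]
        constructor
        · rintro ⟨hl, h⟩
          by_contra hcon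
          push Not at hcon
          simp [hy.2 l hl hcon.1, hrj.2 l hl hcon.2] at h
        · rintro (rfl | rfl)
          · exact ⟨hiS, by simp [hy.1, hrj.2 l hiS hji.symm]⟩
          · exact ⟨hj, by simp [hrj.1, hy.2 l hj hji]⟩
      refine le_trans (le_of_eq ?_) (card_le_card hsub)
      rw [card_biUnion]
      · rw [sum_congr rfl (fun j _ => card_image_of_injective _ (add_left_injective (r j))),
          sum_const, smul_eq_mul, card_erase_of_mem hi]
      · intro j hj k hk hjk
        rw [Function.onFun, disjoint_left]
        intro z hz hz'
        simp only [coe_erase, coe_compl, Set.mem_sdiff, Set.mem_compl_iff, mem_coe,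
          Set.mem_singleton_iff, mem_image, mem_filter] at hz hz' hj hk
        obtain ⟨y, ⟨_, hy⟩, rfl⟩ := hz
        obtain ⟨x, ⟨_, hx⟩, he⟩ := hz'
        have h := congrFun he j
        simp [(hr j hj.1).1, (hr k hk.1).2 j hj.1 hjk, hy.2 j hj.1 hj.2, hx.2 j hj.1 hj.2] at h
    have hfin := sum_le_sum hlow
    rw [← mul_sum, ← ha, hdc] at hfin
    nlinarith

open Classical in
lemma half_bound {n : ℕ} (T : Finset (Fin n)) (hT : 2 ≤ T.card) (N : ℕ) (f : Fin n → ℕ)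
    (h : ∀ i ∈ T, ∀ j ∈ T, i < j → f i + f j ≤ N) : 2 * ∑ i ∈ T, f i ≤ T.card * N := by
  have h' : ∀ i ∈ T, ∀ j ∈ T.erase i, f i + f j ≤ N := by
    intro i hi j hj
    rw [mem_erase] at hj
    rcases lt_or_gt_of_ne hj.1 with hlt | hlt
    · rw [add_comm]; exact h j hj.2 i hi hlt
    · exact h i hi j hj.2 hlt
  have h1 : ∑ i ∈ T, ∑ j ∈ T.erase i, (f i + f j) ≤ ∑ i ∈ T, ∑ j ∈ T.erase i, N :=
    sum_le_sum fun i hi => sum_le_sum fun j hj => h' i hi j hj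
  obtain ⟨k, hk⟩ : ∃ k, T.card = k + 2 := ⟨T.card - 2, by omega⟩
  have h2 : ∀ i ∈ T, ∑ j ∈ T.erase i, (f i + f j) = k * f i + ∑ j ∈ T, f j := by
    intro i hi
    rw [sum_add_distrib, sum_const, smul_eq_mul, card_erase_of_mem hi, hk,
      ← add_sum_erase T f hi]
    simp only [Nat.add_succ_sub_one]
    ring
  have h3 : ∑ i ∈ T, ∑ j ∈ T.erase i, N = (k + 2) * ((k + 1) * N) := by
    have : ∀ i ∈ T, ∑ j ∈ T.erase i, N = (k + 1) * N := by
      intro i hi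
      rw [sum_const, card_erase_of_mem hi, smul_eq_mul, hk]
      simp
    rw [sum_congr rfl this, sum_const, smul_eq_mul, hk]
  rw [h3, sum_congr rfl h2, sum_add_distrib, ← mul_sum, sum_const, smul_eq_mul, hk] at h1
  rw [hk]
  have : (k + 1) * (2 * ∑ i ∈ T, f i) ≤ (k + 1) * ((k + 2) * N) := by nlinarith
  exact Nat.le_of_mul_le_mul_left this (by omega)

lemma core (t : ℝ) (ht : 2 ≤ t) {n : ℕ} (A₀ : Finset (Fin n → ZMod 2)) (h₀ : Good ∅ A₀)
    (hK : ((A₀ + A₀).card : ℝ) ≤ (t * (t - 1) / 2 + t + 1) / (t + 1) * A₀.card) :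
    (2 ^ n : ℝ) / A₀.card ≤ (2 : ℝ) ^ t / (t + 1) := by
  classical
  obtain ⟨S, A, hg, hc, hs, h3, h4⟩ := exists_structure A₀ h₀
  obtain ⟨c1, c2⟩ := counting S A hg h3 _ rfl
  have c3 : 2 ≤ Sᶜ.card → 2 * ∑ j ∈ Sᶜ, (A.filter (InC S j)).card ≤ Sᶜ.card * 2 ^ S.card := fun h2 => half_bound Sᶜ h2 (2 ^ S.card) (fun j => (A.filter (InC S j)).card)
    (fun i hi j hj hij => h4 i (by simpa using hi) j (by simpa using hj) hij)
  generalize ∑ j ∈ Sᶜ, (A.filter (InC S j)).card = a at c1 c2 c3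
  have hn : S.card + Sᶜ.card = n := by
    rw [card_add_card_compl, Fintype.card_fin]
  generalize Sᶜ.card = m at hn c2 c3
  set N : ℝ := 2 ^ S.card with hN
  have hNpos : 0 < N := by positivity
  have hA0 : (A₀.card : ℝ) = N + a := by
    rw [← hc, c1]; push_cast; rfl
  have h2n : (2 : ℝ) ^ n = N * 2 ^ m := by rw [← hn, pow_add]
  set K := (t * (t - 1) / 2 + t + 1) / (t + 1) with hKdef
  have hapos : (0 : ℝ) ≤ a := Nat.cast_nonneg a
  have hnum := numeric t ht m (a / N) (by positivity)
    (by
      intro h2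
      have : (2 * (a : ℝ)) ≤ m * N := by
        have := c3 h2
        rw [hN]
        exact_mod_cast this
      rw [← mul_div_assoc, div_le_iff₀ hNpos]
      exact this)
    (by
      intro h1
      have h2 : 2 * (N * (1 + m)) + (m - 1) * a ≤ 2 * ((A + A).card : ℝ) := by
        have : ((2 * (2 ^ S.card * (1 + m)) + (m - 1) * a : ℕ) : ℝ) ≤ ((2 * (A + A).card : ℕ) : ℝ) := by
          exact_mod_cast c2
        push_cast [Nat.cast_sub h1] at this
        exact this
      have h5 : ((A + A).card : ℝ) ≤ (A₀ + A₀).card := by exact_mod_cast hs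
      rw [hA0] at hK
      have h6 : (2 * (1 + m) + (m - 1) * (a / N)) * N ≤ 2 * K * (1 + a / N) * N := by
        have e1 : (2 * (1 + m) + (m - 1) * (a / N)) * N = 2 * (N * (1 + m)) + (m - 1) * a := by
          field_simp
        have e2 : 2 * K * (1 + a / N) * N = 2 * (K * (N + a)) := by
          field_simp
        rw [e1, e2]
        linarith
      exact le_of_mul_le_mul_right h6 hNpos)
  rw [div_le_div_iff₀ (by rw [hA0]; positivity) (by linarith), hA0, h2n]
  have := mul_le_mul_of_nonneg_left hnum hNpos.le
  calc N * 2 ^ m * (t + 1) = N * (2 ^ m * (t + 1)) := by ring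
    _ ≤ _ := this
    _ = 2 ^ t * (N + a) := by field_simp

lemma reduction {n : ℕ} (A : Finset (Fin n → ZMod 2)) (hA : A.Nonempty) :
    ∃ (d : ℕ) (B : Finset (Fin d → ZMod 2)), Good ∅ B ∧ B.card = A.card ∧
      (B + B).card = (A + A).card ∧
      Nat.card (affineSpan (ZMod 2) (A : Set (Fin n → ZMod 2))) = 2 ^ d := by
  classical
  obtain ⟨a, ha⟩ := hA
  set A' : Finset (Fin n → ZMod 2) := A.image (fun y => y + a) with hA'
  obtain ⟨d, f, hd, hf, hspan, hli⟩ : ∃ (d : ℕ) (f : Fin d → Fin n → ZMod 2),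
      d = Module.finrank (ZMod 2) (Submodule.span (ZMod 2) (A' : Set (Fin n → ZMod 2))) ∧
      (∀ i, f i ∈ A') ∧ Submodule.span (ZMod 2) (Set.range f) =
        Submodule.span (ZMod 2) (A' : Set (Fin n → ZMod 2)) ∧ LinearIndependent (ZMod 2) f := by
    obtain ⟨f, hf, hspan, hli⟩ := Submodule.exists_fun_fin_finrank_span_eq (ZMod 2)
      (A' : Set (Fin n → ZMod 2))
    exact ⟨_, f, rfl, fun i => by simpa using hf i, hspan, hli⟩
  set φ : (Fin d → ZMod 2) →ₗ[ZMod 2] (Fin n → ZMod 2) := Fintype.linearCombination (ZMod 2) f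
    with hφ
  have hinj : Function.Injective φ := by
    exact linearIndependent_iff_injective_fintypeLinearCombination.1 hli
  have hrange : LinearMap.range φ = Submodule.span (ZMod 2) (A' : Set (Fin n → ZMod 2)) := by
    rw [hφ, Fintype.range_linearCombination, hspan]
  set B : Finset (Fin d → ZMod 2) := univ.filter fun x => φ x ∈ A' with hB
  have himg : B.image φ = A' := by
    ext y
    simp only [mem_image, hB, mem_filter, mem_univ, true_and]
    constructor
    · rintro ⟨x, hx, rfl⟩; exact hx
    · intro hy
      have : y ∈ LinearMap.range φ := by
        rw [hrange]; exact Submodule.subset_span (by simpa using hy)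
      obtain ⟨x, rfl⟩ := this
      exact ⟨x, hy, rfl⟩
  have h0A : (0 : Fin n → ZMod 2) ∈ A' := by
    rw [hA', mem_image]; exact ⟨a, ha, z2_add_self a⟩
  have hAA : A' + A' = A + A := by
    ext z
    simp only [mem_add, hA', mem_image]
    constructor
    · rintro ⟨_, ⟨x, hx, rfl⟩, _, ⟨y, hy, rfl⟩, rfl⟩
      refine ⟨x, hx, y, hy, ?_⟩
      have : x + a + (y + a) = x + y + a + a := by abel
      rw [this, z2_add_add]
    · rintro ⟨x, hx, y, hy, rfl⟩
      refine ⟨_, ⟨x, hx, rfl⟩, _, ⟨y, hy, rfl⟩, ?_⟩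
      have : x + a + (y + a) = x + y + a + a := by abel
      rw [this, z2_add_add]
  refine ⟨d, B, ⟨?_, ?_⟩, ?_, ?_, ?_⟩
  · intro y hy
    have : y = 0 := by
      funext i; exact hy i (by simp)
    subst this
    simp [hB, h0A]
  · intro j _
    refine ⟨Pi.single j 1, ?_, InC_single _ j⟩
    simp only [hB, mem_filter, mem_univ, true_and, hφ, Fintype.linearCombination_apply_single,
      one_smul]
    exact hf j
  · rw [← card_image_of_injective B hinj, himg, hA',
      card_image_of_injective _ (add_left_injective a)]
  · rw [← card_image_of_injective (B + B) hinj, ← hAA, ← himg, image_add]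
  · have hdir : (affineSpan (ZMod 2) (A : Set (Fin n → ZMod 2))).direction =
        Submodule.span (ZMod 2) (A' : Set (Fin n → ZMod 2)) := by
      rw [direction_affineSpan, vectorSpan_eq_span_vsub_set_right (ZMod 2) (p := a) (by simpa using ha)]
      congr 1
      ext z
      simp only [hA', Set.mem_image, mem_coe, vsub_eq_sub, coe_image]
      have hs : ∀ x : Fin n → ZMod 2, x - a = x + a := fun x => by
        rw [sub_eq_iff_eq_add, z2_add_add]
      simp only [hs]
    have e : (affineSpan (ZMod 2) (A : Set (Fin n → ZMod 2))).direction ≃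
        affineSpan (ZMod 2) (A : Set (Fin n → ZMod 2)) :=
      haveI : Nonempty (affineSpan (ZMod 2) (A : Set (Fin n → ZMod 2))) :=
        ⟨⟨a, mem_affineSpan (ZMod 2) (by simpa using ha)⟩⟩
      Equiv.vaddConst (⟨a, mem_affineSpan (ZMod 2) (by simpa using ha)⟩ :
        affineSpan (ZMod 2) (A : Set (Fin n → ZMod 2)))
    rw [← Nat.card_congr e, hdir, Module.natCard_eq_pow_finrank (K := ZMod 2)]
    simp [hd]

/-- The Freiman–Ruzsa constant for `(ZMod 2)^n`: the supremum of the spanning constant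
`|⟨A⟩|/|A|` (affine span) over all subsets of all `(ZMod 2)^n` with doubling constant
at most `K`. -/
noncomputable def FRconst (K : ℝ) : ℝ :=
  sSup {r : ℝ | ∃ (n : ℕ) (A : Finset (Fin n → ZMod 2)), A.Nonempty ∧
    ((A + A).card : ℝ) ≤ K * A.card ∧
    r = (Nat.card (affineSpan (ZMod 2) (A : Set (Fin n → ZMod 2))) : ℝ) / A.card}

theorem stmt10 (t : ℝ) (ht : 2 ≤ t) :
    (∀ (n : ℕ) (A : Finset (Fin n → ZMod 2)),
      affineSpan (ZMod 2) (A : Set (Fin n → ZMod 2)) = ⊤ →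
      ((A + A).card : ℝ) / A.card ≤ (t * (t - 1) / 2 + t + 1) / (t + 1) →
      (2 ^ n : ℝ) / A.card ≤ (2 : ℝ) ^ t / (t + 1)) ∧
    FRconst ((t * (t - 1) / 2 + t + 1) / (t + 1)) ≤ (2 : ℝ) ^ t / (t + 1) := by
  have main : ∀ (n : ℕ) (A : Finset (Fin n → ZMod 2)), A.Nonempty →
      ((A + A).card : ℝ) ≤ (t * (t - 1) / 2 + t + 1) / (t + 1) * A.card →
      (Nat.card (affineSpan (ZMod 2) (A : Set (Fin n → ZMod 2))) : ℝ) / A.card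
        ≤ (2 : ℝ) ^ t / (t + 1) := by
    intro n A hA hK
    obtain ⟨d, B, hB, h1, h2, h3⟩ := reduction A hA
    have := core t ht B hB (by rw [h1, h2]; exact hK)
    rw [h1] at this
    rw [h3]
    push_cast
    exact this
  constructor
  · intro n A hspan hK
    have hA : A.Nonempty := by
      rw [nonempty_iff_ne_empty]
      rintro rfl
      simp only [coe_empty, AffineSubspace.span_empty] at hspan
      exact AffineSubspace.bot_ne_top (ZMod 2) _ _ hspan
    have hpos : (0 : ℝ) < A.card := by exact_mod_cast hA.card_pos
    have := main n A hA (by rwa [div_le_iff₀ hpos] at hK)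
    rw [hspan] at this
    have hc : Nat.card (⊤ : AffineSubspace (ZMod 2) (Fin n → ZMod 2)) = 2 ^ n := by
      have : Nat.card (⊤ : AffineSubspace (ZMod 2) (Fin n → ZMod 2)) =
        Nat.card (Fin n → ZMod 2) := Nat.card_congr (Equiv.Set.univ _)
      rw [this]
      simp
    rw [hc] at this
    push_cast at this
    exact this
  · apply Real.sSup_le
    · rintro r ⟨n, A, hA, hK, rfl⟩
      exact main n A hA hK
    · have : 0 < t + 1 := by linarith
      positivity
end

section
/- Superlinearity of F: the function F(K) = sup{|⟨A⟩|/|A| : A ⊆ Z_2^n, n ∈ ℕ, |A+A|/|A| ≤ K} satisfies F(K₁)/K₁ ≤ F(K₂)/K₂ for all 1 ≤ K₁ < K₂. -/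
open Finset Pointwise

/-- The set whose supremum defines `FRconst`. -/
def FRset (K : ℝ) : Set ℝ :=
  {r : ℝ | ∃ (n : ℕ) (A : Finset (Fin n → ZMod 2)), A.Nonempty ∧
    ((A + A).card : ℝ) ≤ K * A.card ∧
    r = (Nat.card (affineSpan (ZMod 2) (A : Set (Fin n → ZMod 2))) : ℝ) / A.card}

/-- Transfer from an arbitrary finite space over `ZMod 2`. -/
lemma mem_FRset_of {V : Type} [AddCommGroup V] [Module (ZMod 2) V] [Finite V] [DecidableEq V]
    (K : ℝ) (A : Finset V) (hA : A.Nonempty) (h : ((A + A).card : ℝ) ≤ K * A.card) :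
    (Nat.card (affineSpan (ZMod 2) (A : Set V)) : ℝ) / A.card ∈ FRset K := by
  classical
  have : Module.Finite (ZMod 2) V := Module.Finite.of_finite
  let e : V ≃ₗ[ZMod 2] (Fin (Module.finrank (ZMod 2) V) → ZMod 2) :=
    (Module.finBasis (ZMod 2) V).equivFun
  have he : Function.Injective e := e.injective
  have hc : (A.image e).card = A.card := Finset.card_image_of_injective _ he
  refine ⟨_, A.image e, hA.image _, ?_, ?_⟩
  · have : A.image e + A.image e = (A + A).image e := by
      rw [Finset.image_add]
    rw [this, Finset.card_image_of_injective _ he, hc]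
    exact h
  · rw [hc]
    congr 2
    have h1 := AffineSubspace.map_span (k := ZMod 2) e.toLinearMap.toAffineMap (A : Set V)
    have h2 : Set.image (e.toLinearMap.toAffineMap : V → _) (A : Set V) = ((A.image e : Finset _) : Set _) := by
      simp
    rw [h2] at h1
    rw [← h1]
    change Nat.card ((affineSpan (ZMod 2) (A : Set V) : Set V)) =
      Nat.card (((affineSpan (ZMod 2) (A : Set V)).map e.toLinearMap.toAffineMap : AffineSubspace _ _) :
        Set (Fin (Module.finrank (ZMod 2) V) → ZMod 2))
    rw [AffineSubspace.coe_map]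
    exact (Nat.card_image_of_injective he _).symm

/-- Ruzsa's Freiman theorem in `(ZMod 2)^n`. -/
lemma FRset_bdd (K : ℝ) : BddAbove (FRset K) := by
  refine ⟨2 ^ (K ^ 4) * K, ?_⟩
  rintro r ⟨n, A, hA, hK, rfl⟩
  have hApos : (0 : ℝ) < A.card := by exact_mod_cast hA.card_pos
  rw [div_le_iff₀ hApos]
  have neg_eq : ∀ x : Fin n → ZMod 2, -x = x := fun x => by
    ext i; simp
  have h4 : ((A + A + A + A).card : ℝ) ≤ K ^ 4 * A.card := by
    have := Finset.pluennecke_ruzsa_inequality_nsmul_add hA A 4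
    have h' : ((4 • A).card : ℝ) ≤ (((A + A).card : ℝ) / A.card) ^ 4 * A.card := by
      have h5 := (NNRat.cast_le (K := ℝ)).2 this
      simpa only [NNRat.cast_mul, NNRat.cast_pow, NNRat.cast_div, NNRat.cast_natCast] using h5
    have e4 : 4 • A = A + A + A + A := by
      simp only [succ_nsmul, zero_nsmul, zero_add]
    rw [e4] at h'
    refine h'.trans ?_
    gcongr
    rwa [div_le_iff₀ hApos]
  obtain ⟨X, -, hX, hcov⟩ := Finset.ruzsa_covering_add hA h4
  set W : Submodule (ZMod 2) (Fin n → ZMod 2) := Submodule.span (ZMod 2) (X : Set _) with hW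
  have hsub : A - A = A + A := by
    ext x
    have hs : ∀ y z : Fin n → ZMod 2, y - z = y + z := fun y z => by
      rw [sub_eq_add_neg, neg_eq]
    simp only [Finset.mem_sub, Finset.mem_add, hs]
  rw [hsub] at hcov
  let P : Set (Fin n → ZMod 2) := (W : Set _) + ((A + A : Finset _) : Set _)
  have hclosed : ∀ a ∈ A, ∀ y ∈ P, y + a ∈ P := by
    rintro a ha _ ⟨w, hw, b, hb, rfl⟩
    have hb' : b ∈ A + A := by exact_mod_cast hb
    obtain ⟨x, hx, c, hc, hxc⟩ := Finset.mem_add.1 (hcov (Finset.add_mem_add hb' ha))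
    refine ⟨w + x, W.add_mem hw (Submodule.subset_span hx), c, by exact_mod_cast hc, ?_⟩
    change w + x + c = w + b + a
    rw [add_assoc, hxc, add_assoc]
  have h0 : (0 : Fin n → ZMod 2) ∈ P := by
    obtain ⟨a, ha⟩ := hA
    refine ⟨0, W.zero_mem, 0, ?_, by simp⟩
    have : a + a = 0 := by
      nth_rewrite 2 [← neg_eq a]
      simp
    rw [← this]
    exact_mod_cast Finset.add_mem_add ha ha
  have hspan : ∀ z ∈ Submodule.span (ZMod 2) (A : Set (Fin n → ZMod 2)), z ∈ P := by
    intro z hz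
    have hz' : ∀ y ∈ P, y + z ∈ P := by
      induction hz using Submodule.span_induction with
      | mem x hx => exact hclosed x hx
      | zero => simp
      | add x y _ _ ihx ihy =>
        intro p hp
        rw [← add_assoc]
        exact ihy _ (ihx _ hp)
      | smul c x _ ih =>
        have : c = 0 ∨ c = 1 := by revert c; decide
        rcases this with rfl | rfl
        · simp
        · simpa using ih
    simpa using hz' 0 h0
  have hsubset : (affineSpan (ZMod 2) (A : Set (Fin n → ZMod 2)) : Set (Fin n → ZMod 2)) ⊆ P := by
    intro z hz
    exact hspan z (affineSpan_le_toAffineSubspace_span hz)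
  have hWc : (Nat.card W : ℝ) ≤ 2 ^ (K ^ 4) := by
    have h1 : Nat.card W = 2 ^ Module.finrank (ZMod 2) W := by
      rw [Module.natCard_eq_pow_finrank (K := ZMod 2)]
      simp
    have h2 : Module.finrank (ZMod 2) W ≤ X.card := finrank_span_finset_le_card X
    rw [h1]
    push_cast
    rw [← Real.rpow_natCast]
    apply Real.rpow_le_rpow_of_exponent_le (by norm_num)
    exact le_trans (by exact_mod_cast h2) hX
  have hP : Nat.card P ≤ Nat.card W * (A + A).card := by
    have := Set.natCard_add_le (s := (W : Set (Fin n → ZMod 2))) (t := ((A + A : Finset _) : Set _))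
    have h6 : Nat.card ((A + A : Finset _) : Set (Fin n → ZMod 2)) = (A + A).card := by
      rw [Nat.card_coe_set_eq, Set.ncard_coe_finset]
    rw [h6] at this
    exact this
  have hN : Nat.card (affineSpan (ZMod 2) (A : Set (Fin n → ZMod 2))) ≤ Nat.card P :=
    Nat.card_mono (Set.toFinite _) hsubset
  calc (Nat.card (affineSpan (ZMod 2) (A : Set (Fin n → ZMod 2))) : ℝ)
      ≤ Nat.card W * (A + A).card := by exact_mod_cast hN.trans hP
    _ ≤ 2 ^ (K ^ 4) * (K * A.card) := by gcongr
    _ = _ := by ring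

/-- Generators for the product space. -/
lemma span_prod_le {n m : ℕ} (A : Finset (Fin n → ZMod 2)) (a₀ : Fin n → ZMod 2) (h₀ : a₀ ∈ A)
    (B : Finset ((Fin n → ZMod 2) × (Fin m → ZMod 2)))
    (hB₁ : ∀ a ∈ A, (a, 0) ∈ B) (hB₂ : ∀ i, (a₀, Pi.single i 1) ∈ B) :
    Nat.card (affineSpan (ZMod 2) (A : Set (Fin n → ZMod 2))) * 2 ^ m ≤
      Nat.card (affineSpan (ZMod 2) (B : Set ((Fin n → ZMod 2) × (Fin m → ZMod 2)))) := by
  set S := affineSpan (ZMod 2) (B : Set ((Fin n → ZMod 2) × (Fin m → ZMod 2))) with hS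
  have s1 : affineSpan (ZMod 2) (A : Set (Fin n → ZMod 2)) ≤
      S.comap (LinearMap.inl (ZMod 2) (Fin n → ZMod 2) (Fin m → ZMod 2)).toAffineMap := by
    rw [affineSpan_le]
    intro a ha
    exact subset_affineSpan _ _ (hB₁ a ha)
  have s2 : (⊤ : Submodule (ZMod 2) (Fin m → ZMod 2)) ≤
      S.direction.comap (LinearMap.inr (ZMod 2) (Fin n → ZMod 2) (Fin m → ZMod 2)) := by
    rw [← (Pi.basisFun (ZMod 2) (Fin m)).span_eq, Submodule.span_le]
    rintro _ ⟨i, rfl⟩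
    have := AffineSubspace.vsub_mem_direction (s := S)
      (subset_affineSpan (ZMod 2) _ (hB₂ i)) (subset_affineSpan (ZMod 2) _ (hB₁ a₀ h₀))
    simpa using this
  have s3 : (affineSpan (ZMod 2) (A : Set (Fin n → ZMod 2)) : Set (Fin n → ZMod 2)) ×ˢ
      (Set.univ : Set (Fin m → ZMod 2)) ⊆ (S : Set ((Fin n → ZMod 2) × (Fin m → ZMod 2))) := by
    rintro ⟨a, h⟩ ⟨ha, -⟩
    have := AffineSubspace.vadd_mem_of_mem_direction (s2 (Submodule.mem_top (x := h))) (s1 ha)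
    simpa using this
  have := Nat.card_mono (Set.toFinite _) s3
  have e : Nat.card ((affineSpan (ZMod 2) (A : Set (Fin n → ZMod 2)) : Set (Fin n → ZMod 2)) ×ˢ
      (Set.univ : Set (Fin m → ZMod 2)) : Set ((Fin n → ZMod 2) × (Fin m → ZMod 2))) =
      Nat.card (affineSpan (ZMod 2) (A : Set (Fin n → ZMod 2))) * 2 ^ m := by
    rw [Nat.card_congr (Equiv.Set.prod _ _), Nat.card_prod]
    congr 1
    simp
  rw [e] at this
  exact this

theorem stmt14 (K₁ K₂ : ℝ) (h₁ : 1 ≤ K₁) (h₁₂ : K₁ < K₂) :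
    FRconst K₁ / K₁ ≤ FRconst K₂ / K₂ := by
  have hK1 : 0 < K₁ := by linarith
  have hK2 : 0 < K₂ := by linarith
  have hF : 0 ≤ FRconst K₂ := by
    apply Real.sSup_nonneg
    rintro r ⟨n, A, -, -, rfl⟩
    positivity
  set θ : ℝ := K₁ / K₂ with hθ
  have hθ0 : 0 < θ := by positivity
  have hθ1 : θ < 1 := (div_lt_one hK2).2 h₁₂
  suffices h : FRconst K₁ ≤ FRconst K₂ * θ by
    rw [div_le_iff₀ hK1]
    calc _ ≤ _ := h
      _ = _ := by rw [hθ]; ring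
  apply Real.sSup_le _ (by positivity)
  rintro r ⟨n, A, hA, hK, rfl⟩
  have hApos : (0 : ℝ) < A.card := by exact_mod_cast hA.card_pos
  rw [div_le_iff₀ hApos]
  obtain ⟨a₀, h₀⟩ := hA
  set s : ℝ := (Nat.card (affineSpan (ZMod 2) (A : Set (Fin n → ZMod 2))) : ℝ) with hs
  set c : ℝ := (A.card : ℝ) with hc
  have hlarge : ∀ᶠ m : ℕ in Filter.atTop, c + m ≤ θ * c * 2 ^ m := by
    have t1 : Filter.Tendsto (fun m : ℕ => c * (1 / 2 : ℝ) ^ m + m * (1 / 2 : ℝ) ^ m)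
        Filter.atTop (nhds (c * 0 + 0)) :=
      ((tendsto_pow_atTop_nhds_zero_of_lt_one (by norm_num) (by norm_num)).const_mul c).add
        (tendsto_self_mul_const_pow_of_lt_one (by norm_num) (by norm_num))
    have t2 : c * 0 + 0 < θ * c := by
      have : 0 < θ * c := by positivity
      simpa using this
    filter_upwards [t1.eventually_lt_const t2] with m hm
    have h2 : (0 : ℝ) < 2 ^ m := by positivity
    have e : (1 / 2 : ℝ) ^ m * 2 ^ m = 1 := by rw [← mul_pow]; norm_num
    have := mul_le_mul_of_nonneg_right hm.le h2.le
    have e2 : (c * (1 / 2 : ℝ) ^ m + m * (1 / 2 : ℝ) ^ m) * 2 ^ m = c + m := by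
      linear_combination (c + m) * e
    rwa [e2] at this
  have key : ∀ᶠ m : ℕ in Filter.atTop,
      s ≤ FRconst K₂ * θ * c + FRconst K₂ * (1 / 2 : ℝ) ^ m := by
    filter_upwards [hlarge] with m hm
    classical
    let G : Finset ((Fin n → ZMod 2) × (Fin m → ZMod 2)) :=
      A.image (fun a => (a, 0)) ∪ Finset.univ.image (fun i : Fin m => (a₀, Pi.single i 1))
    let T : Finset ((Fin n → ZMod 2) × (Fin m → ZMod 2)) := A ×ˢ Finset.univ
    have hGT : G ⊆ T := by
      intro x hx
      simp only [G, T, Finset.mem_union, Finset.mem_image, Finset.mem_product,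
        Finset.mem_univ, true_and, and_true] at hx ⊢
      rcases hx with ⟨a, ha, rfl⟩ | ⟨i, rfl⟩
      · exact ha
      · exact h₀
    have hGc : G.card ≤ A.card + m := by
      refine (Finset.card_union_le _ _).trans (add_le_add Finset.card_image_le ?_)
      exact Finset.card_image_le.trans (by simp)
    have hTc : T.card = A.card * 2 ^ m := by
      simp [T, Finset.card_product]
    let N := ⌈θ * c * 2 ^ m⌉₊
    have hpos : 0 < θ * c * 2 ^ m := by positivity
    have hN1 : G.card ≤ N := by
      refine hGc.trans ?_
      have : ((A.card + m : ℕ) : ℝ) ≤ N := by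
        push_cast
        exact hm.trans (Nat.le_ceil _)
      exact_mod_cast this
    have hN2 : N ≤ T.card := by
      rw [hTc]
      apply Nat.ceil_le.2
      push_cast
      have : θ * (c * 2 ^ m) ≤ 1 * (c * 2 ^ m) := by gcongr
      linarith
    obtain ⟨B, hGB, hBT, hBc⟩ := Finset.exists_subsuperset_card_eq hGT hN1 hN2
    have hB1 : ∀ a ∈ A, (a, 0) ∈ B := fun a ha => hGB
      (Finset.mem_union_left _ (Finset.mem_image_of_mem (fun a => (a, (0 : Fin m → ZMod 2))) ha))
    have hB2 : ∀ i, (a₀, Pi.single i 1) ∈ B := fun i => hGB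
      (Finset.mem_union_right _ (Finset.mem_image_of_mem
        (fun i : Fin m => (a₀, (Pi.single i 1 : Fin m → ZMod 2))) (Finset.mem_univ i)))
    have hsp := span_prod_le A a₀ h₀ B hB1 hB2
    have hBB : B + B ⊆ (A + A) ×ˢ (Finset.univ : Finset (Fin m → ZMod 2)) := by
      intro x hx
      obtain ⟨y, hy, z, hz, rfl⟩ := Finset.mem_add.1 hx
      have hy' := (Finset.mem_product.1 (hBT hy)).1
      have hz' := (Finset.mem_product.1 (hBT hz)).1
      exact Finset.mem_product.2 ⟨Finset.add_mem_add hy' hz', Finset.mem_univ _⟩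
    have hBBc : (B + B).card ≤ (A + A).card * 2 ^ m := by
      refine (Finset.card_le_card hBB).trans ?_
      simp [Finset.card_product]
    have hBr : (B.card : ℝ) = N := by rw [hBc]
    have hNle : θ * c * 2 ^ m ≤ N := Nat.le_ceil _
    have hNlt : (N : ℝ) < θ * c * 2 ^ m + 1 := Nat.ceil_lt_add_one hpos.le
    have hBd : ((B + B).card : ℝ) ≤ K₂ * B.card := by
      rw [hBr]
      calc ((B + B).card : ℝ) ≤ (A + A).card * 2 ^ m := by exact_mod_cast hBBc
        _ ≤ (K₁ * c) * 2 ^ m := by gcongr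
        _ = K₂ * (θ * c * 2 ^ m) := by rw [hθ]; field_simp
        _ ≤ K₂ * N := by gcongr
    have hmem := mem_FRset_of K₂ B ⟨_, hB1 _ h₀⟩ hBd
    have hle := le_csSup (FRset_bdd K₂) hmem
    change _ ≤ FRconst K₂ at hle
    have hNpos : (0 : ℝ) < N := hpos.trans_le hNle
    rw [hBr, div_le_iff₀ hNpos] at hle
    have h3 : s * 2 ^ m ≤ FRconst K₂ * (θ * c * 2 ^ m + 1) := by
      calc s * 2 ^ m ≤ _ := by rw [hs]; exact_mod_cast hsp
        _ ≤ _ := hle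
        _ ≤ _ := by gcongr
    have e : (1 / 2 : ℝ) ^ m * 2 ^ m = 1 := by rw [← mul_pow]; norm_num
    have h2 : (0 : ℝ) < 2 ^ m := by positivity
    refine le_of_mul_le_mul_right (h3.trans_eq ?_) h2
    linear_combination -(FRconst K₂) * e
  have lim : Filter.Tendsto (fun m : ℕ => FRconst K₂ * θ * c + FRconst K₂ * (1 / 2 : ℝ) ^ m)
      Filter.atTop (nhds (FRconst K₂ * θ * c + FRconst K₂ * 0)) :=
    ((tendsto_pow_atTop_nhds_zero_of_lt_one (by norm_num) (by norm_num)).const_mul _).const_add _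
  have := ge_of_tendsto lim key
  simpa using this
end
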